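/- arXiv:2404.16231 — 3 statements merged into one kernel-verified Lean document; each statement's English description precedes it below -/
import Mathlib

section
/- Completeness of the infinitary axiomatisations: for closed guarded μ-expressions e, f, if L(e) ⊆ L(f), then μHKA_ω derives e → [f] by a wellfounded proof, and consequently the theory μCA derives e ≤ f. -/
/-!
Both derivability claims are proved by cutting through words.

For a cedent calculus with the `ω`-rule, a left occurrence of `e` can be replaced by all words of
its language, and a right occurrence of `e` by any one word of its language. Both facts are
logical-relation arguments over simultaneous substitutions `σ` of closed expressions and
environments `ρ` of languages related pointwise (`leftGood_inst`, `sem_le_rightLang`).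

* On the left, the case `μX e` uses the `ω`-rule: every approximant `e^n(0)` is dominated by the
  words of the least fixed point, because the latter is a prefixed point.
* On the right, the words `w` for which `e` may be replaced by `w` form a language `rightLang e`,
  and the rule `μ-r` says that `rightLang (μX e)` is a prefixed point; Knaster–Tarski induction
  applies.

Hence `e → [f]` reduces to the sequents `w → [f]` for `w ∈ L(e) ⊆ L(f)`, and these to `w → [w]`.

For `μCA` the same scheme is carried out in the idempotent semiring of expressions modulo `μCA`.
There the left-hand fact is `μ`-continuity again, but `e(μX e) ≤ μX e` is not an axiom, so the
right-hand fact uses instead that the semantics is `ω`-continuous (`exists_mem_sem`): each word of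
`μX e` already belongs to a finite iterate of `e`, thus lies below some `e^n(0)`.
-/

namespace CFPT

/-- `μ`-expressions over alphabet `α`, with de Bruijn indices for variables. -/
inductive Exp (α : Type) : Type
  | zero : Exp α
  | one : Exp α
  | var (n : ℕ) : Exp α
  | tok (a : α) : Exp α
  | plus (e f : Exp α) : Exp α
  | times (e f : Exp α) : Exp α
  | mu (e : Exp α) : Exp α
  deriving DecidableEq

namespace Exp

variable {α : Type}

/-- all de Bruijn indices are `< k` -/
def ClosedUnder : ℕ → Exp α → Prop
  | _, zero => True
  | _, one => True
  | k, var n => n < k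
  | _, tok _ => True
  | k, plus e f => ClosedUnder k e ∧ ClosedUnder k f
  | k, times e f => ClosedUnder k e ∧ ClosedUnder k f
  | k, mu e => ClosedUnder (k + 1) e

def Closed (e : Exp α) : Prop := ClosedUnder 0 e

/-- substitute the closed expression `g` for de Bruijn variable `d`. -/
def subst (g : Exp α) : ℕ → Exp α → Exp α
  | _, zero => zero
  | _, one => one
  | d, var n => if n = d then g else var n
  | _, tok a => tok a
  | d, plus e f => plus (subst g d e) (subst g d f)
  | d, times e f => times (subst g d e) (subst g d f)
  | d, mu e => mu (subst g (d + 1) e)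

/-- the unfolding `e(μX e)` of the fixed point `μX e` (given by its body `e`). -/
def unfold (e : Exp α) : Exp α := subst (mu e) 0 e

/-- the approximants `e^n(0)` of `μX e` (given by its body `e`):
`e^0(0) = 0` and `e^(n+1)(0) = e(e^n(0))`. -/
def iter (e : Exp α) : ℕ → Exp α
  | 0 => zero
  | n + 1 => subst (iter e n) 0 e

/-- left-productive expressions: `p ::= a | p+q | p·e | μX p` -/
inductive LeftProductive : Exp α → Prop
  | tok (a : α) : LeftProductive (tok a)
  | plus {p q} : LeftProductive p → LeftProductive q → LeftProductive (plus p q)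
  | times {p} (e) : LeftProductive p → LeftProductive (times p e)
  | mu {p} : LeftProductive p → LeftProductive (mu p)

/-- productive expressions: `p ::= a | p+q | p·e | e·p | μX p` -/
inductive Productive : Exp α → Prop
  | tok (a : α) : Productive (tok a)
  | plus {p q} : Productive p → Productive q → Productive (plus p q)
  | timesL {p} (e) : Productive p → Productive (times p e)
  | timesR {p} (e) : Productive p → Productive (times e p)
  | mu {p} : Productive p → Productive (mu p)

/-- every free occurrence of variable `n` in the expression occurs inside a
subexpression (in which it remains free) satisfying `P`. -/
def GuardVar (P : Exp α → Prop) : ℕ → Exp α → Prop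
  | _, zero => True
  | _, one => True
  | _, tok _ => True
  | n, var m => P (var m) ∨ m ≠ n
  | n, plus e f => P (plus e f) ∨ (GuardVar P n e ∧ GuardVar P n f)
  | n, times e f => P (times e f) ∨ (GuardVar P n e ∧ GuardVar P n f)
  | n, mu e => P (mu e) ∨ GuardVar P (n + 1) e

/-- each variable occurrence occurs free in a subexpression satisfying `P`. -/
def GuardedBy (P : Exp α → Prop) : Exp α → Prop
  | zero => True
  | one => True
  | var _ => True
  | tok _ => True
  | plus e f => GuardedBy P e ∧ GuardedBy P f
  | times e f => GuardedBy P e ∧ GuardedBy P f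
  | mu e => GuardVar P 0 e ∧ GuardedBy P e

/-- each variable occurrence occurs free in a productive subexpression. -/
def Guarded (e : Exp α) : Prop := GuardedBy Productive e

/-- each variable occurrence occurs free in a left-productive subexpression. -/
def LeftGuarded (e : Exp α) : Prop := GuardedBy LeftProductive e

end Exp

/-- extend an environment by a new language for variable `0`. -/
def consEnv {α} (A : Language α) (ρ : ℕ → Language α) : ℕ → Language α
  | 0 => A
  | n + 1 => ρ n

/-- language semantics of `μ`-expressions, relative to an environment;
`μX e` denotes the least fixed point of `A ↦ ⟦e⟧(A)` (Knaster–Tarski). -/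
def sem {α} (ρ : ℕ → Language α) : Exp α → Language α
  | .zero => 0
  | .one => 1
  | .var n => ρ n
  | .tok a => {[a]}
  | .plus e f => sem ρ e + sem ρ f
  | .times e f => sem ρ e * sem ρ f
  | .mu e => sInf {A : Language α | sem (consEnv A ρ) e ≤ A}

/-- the language of a (closed) expression. -/
def langOf {α} (e : Exp α) : Language α := sem (fun _ => 0) e

/-- a cedent: a finite list of expressions. -/
abbrev Cedent (α : Type) := List (Exp α)

/-- language of a cedent: the concatenation (product) of its members' languages. -/
def langCed {α} (Γ : Cedent α) : Language α := (Γ.map langOf).prod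

/-- right-hand side of a hypersequent: a finite set of cedents. -/
abbrev RHSet (α : Type) := Finset (Cedent α)

/-- language of a RHS: the union (sum) of the languages of its cedents. -/
def langRHS {α} (S : RHSet α) : Language α := S.sup langCed

def CedClosed {α} (Γ : Cedent α) : Prop := ∀ e ∈ Γ, e.Closed
def CedGuarded {α} (Γ : Cedent α) : Prop := ∀ e ∈ Γ, e.Guarded

/-- a hypersequent `Γ → S`. -/
structure Sqt (α : Type) : Type where
  lhs : Cedent α
  rhs : RHSet α

/-- validity of a hypersequent in the language model. -/
def Sqt.Valid {α} (s : Sqt α) : Prop := langCed s.lhs ≤ langRHS s.rhs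

def Sqt.ClosedSeq {α} (s : Sqt α) : Prop :=
  CedClosed s.lhs ∧ ∀ Δ ∈ s.rhs, CedClosed Δ

def Sqt.GuardedSeq {α} (s : Sqt α) : Prop :=
  CedGuarded s.lhs ∧ ∀ Δ ∈ s.rhs, CedGuarded Δ

/-- rule instances of the hypersequential system `μHKA`. -/
inductive Rule (α : Type) : Type
  | init : Rule α
  | wr (Γ : Cedent α) (S : RHSet α) (Δ : Cedent α) : Rule α
  | kl (a : α) (Γ : Cedent α) (S : RHSet α) : Rule α
  | kr (a : α) (Γ : Cedent α) (S : RHSet α) : Rule α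
  | zeroL (Γ Γ' : Cedent α) (S : RHSet α) : Rule α
  | oneL (Γ Γ' : Cedent α) (S : RHSet α) : Rule α
  | timesL (Γ : Cedent α) (e f : Exp α) (Γ' : Cedent α) (S : RHSet α) : Rule α
  | plusL (Γ : Cedent α) (e f : Exp α) (Γ' : Cedent α) (S : RHSet α) : Rule α
  | muL (Γ : Cedent α) (e : Exp α) (Γ' : Cedent α) (S : RHSet α) : Rule α
  | zeroR (Γ : Cedent α) (S : RHSet α) (Δ Δ' : Cedent α) : Rule α
  | oneR (Γ : Cedent α) (S : RHSet α) (Δ Δ' : Cedent α) : Rule α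
  | timesR (Γ : Cedent α) (S : RHSet α) (Δ : Cedent α) (e f : Exp α) (Δ' : Cedent α) : Rule α
  | plusR (Γ : Cedent α) (S : RHSet α) (Δ : Cedent α) (e f : Exp α) (Δ' : Cedent α) : Rule α
  | muR (Γ : Cedent α) (S : RHSet α) (Δ : Cedent α) (e : Exp α) (Δ' : Cedent α) : Rule α

namespace Rule

variable {α : Type} [DecidableEq α]

/-- conclusion of a rule instance. -/
def concl : Rule α → Sqt α
  | init => ⟨[], {[]}⟩
  | wr Γ S Δ => ⟨Γ, insert Δ S⟩
  | kl a Γ S => ⟨.tok a :: Γ, S.image (Exp.tok a :: ·)⟩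
  | kr a Γ S => ⟨Γ ++ [.tok a], S.image (· ++ [Exp.tok a])⟩
  | zeroL Γ Γ' S => ⟨Γ ++ .zero :: Γ', S⟩
  | oneL Γ Γ' S => ⟨Γ ++ .one :: Γ', S⟩
  | timesL Γ e f Γ' S => ⟨Γ ++ .times e f :: Γ', S⟩
  | plusL Γ e f Γ' S => ⟨Γ ++ .plus e f :: Γ', S⟩
  | muL Γ e Γ' S => ⟨Γ ++ .mu e :: Γ', S⟩
  | zeroR Γ S Δ Δ' => ⟨Γ, insert (Δ ++ .zero :: Δ') S⟩
  | oneR Γ S Δ Δ' => ⟨Γ, insert (Δ ++ .one :: Δ') S⟩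
  | timesR Γ S Δ e f Δ' => ⟨Γ, insert (Δ ++ .times e f :: Δ') S⟩
  | plusR Γ S Δ e f Δ' => ⟨Γ, insert (Δ ++ .plus e f :: Δ') S⟩
  | muR Γ S Δ e Δ' => ⟨Γ, insert (Δ ++ .mu e :: Δ') S⟩

/-- list of premisses of a rule instance. -/
def prems : Rule α → List (Sqt α)
  | init => []
  | wr Γ S _ => [⟨Γ, S⟩]
  | kl _ Γ S => [⟨Γ, S⟩]
  | kr _ Γ S => [⟨Γ, S⟩]
  | zeroL _ _ _ => []
  | oneL Γ Γ' S => [⟨Γ ++ Γ', S⟩]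
  | timesL Γ e f Γ' S => [⟨Γ ++ e :: f :: Γ', S⟩]
  | plusL Γ e f Γ' S => [⟨Γ ++ e :: Γ', S⟩, ⟨Γ ++ f :: Γ', S⟩]
  | muL Γ e Γ' S => [⟨Γ ++ e.unfold :: Γ', S⟩]
  | zeroR Γ S _ _ => [⟨Γ, S⟩]
  | oneR Γ S Δ Δ' => [⟨Γ, insert (Δ ++ Δ') S⟩]
  | timesR Γ S Δ e f Δ' => [⟨Γ, insert (Δ ++ e :: f :: Δ') S⟩]
  | plusR Γ S Δ e f Δ' => [⟨Γ, insert (Δ ++ e :: Δ') (insert (Δ ++ f :: Δ') S)⟩]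
  | muR Γ S Δ e Δ' => [⟨Γ, insert (Δ ++ e.unfold :: Δ') S⟩]

/-- the rule is an instance of `μ-l`. -/
def IsMuL : Rule α → Prop
  | muL _ _ _ _ => True
  | _ => False

/-- logical rules (neither `init`, weakening, nor `k` rules). -/
def IsLogical : Rule α → Prop
  | init => False
  | wr _ _ _ => False
  | kl _ _ _ => False
  | kr _ _ _ => False
  | _ => True

/-- immediate ancestry on the LHS: the formula at position `j` of the LHS of a
premiss is the immediate ancestor of the formula at position `ancL r j` of the
LHS of the conclusion. -/
def ancL : Rule α → ℕ → ℕ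
  | kl _ _ _ => fun j => j + 1
  | oneL Γ _ _ => fun j => if j < Γ.length then j else j + 1
  | timesL Γ _ _ _ _ => fun j =>
      if j < Γ.length then j else if j ≤ Γ.length + 1 then Γ.length else j - 1
  | _ => fun j => j

/-- position `j` of the LHS of the conclusion is principal for a `μ-l` step. -/
def IsPrincMuL : Rule α → ℕ → Prop
  | muL Γ _ _ _, j => j = Γ.length
  | _, _ => False

end Rule

/-- a (non-wellfounded) preproof of `μHKA`: a possibly infinite tree of rule
instances, represented by its labelling of tree positions. -/
structure Preproof (α : Type) [DecidableEq α] : Type where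
  rule : List ℕ → Option (Rule α)
  root_isSome : (rule []).isSome
  children_concl : ∀ p r, rule p = some r → ∀ (i : ℕ) (h : i < r.prems.length),
    ∃ r', rule (p ++ [i]) = some r' ∧ r'.concl = r.prems.get ⟨i, h⟩
  children_none : ∀ p r, rule p = some r → ∀ i : ℕ, r.prems.length ≤ i → rule (p ++ [i]) = none
  grounded : ∀ p i, (rule (p ++ [i])).isSome → (rule p).isSome

namespace Preproof

variable {α : Type} [DecidableEq α]

/-- the preproof has endsequent `s`. -/
def Concl (P : Preproof α) (s : Sqt α) : Prop :=
  ∃ r, P.rule [] = some r ∧ r.concl = s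

/-- the node of a branch `b` at depth `n`. -/
def pathOf (b : ℕ → ℕ) (n : ℕ) : List ℕ := (List.range n).map b

/-- `b` describes an infinite branch of `P`. -/
def IsBranch (P : Preproof α) (b : ℕ → ℕ) : Prop :=
  ∀ n, (P.rule (pathOf b n)).isSome

/-- `P` is progressing: every infinite branch has infinitely many `μ-l` steps. -/
def Progressing (P : Preproof α) : Prop :=
  ∀ b, P.IsBranch b → ∀ N, ∃ n, N ≤ n ∧ ∃ r, P.rule (pathOf b n) = some r ∧ r.IsMuL

end Preproof

/-- `μHKA ⊢∞ s` : the hypersequent `s` has a progressing non-wellfounded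
(`∞`-)proof in `μHKA`. -/
def ProofInf {α : Type} [DecidableEq α] (s : Sqt α) : Prop :=
  ∃ P : Preproof α, P.Concl s ∧ P.Progressing

/-- wellfounded (possibly infinitely branching) derivability in `μHKA_ω`,
the extension of `μHKA` by the `ω`-rule. -/
inductive DerivW {α : Type} [DecidableEq α] : Sqt α → Prop
  | rule (r : Rule α) : (∀ s ∈ r.prems, DerivW s) → DerivW r.concl
  | omega (Γ : Cedent α) (e : Exp α) (Γ' : Cedent α) (S : RHSet α) :
      (∀ n : ℕ, DerivW ⟨Γ ++ Exp.iter e n :: Γ', S⟩) → DerivW ⟨Γ ++ .mu e :: Γ', S⟩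

/-- the equational theory `μCA` of `μ`-continuous Chomsky algebras:
idempotent semiring (dioid) axioms together with `μ`-continuity. -/
inductive CA {α : Type} : Exp α → Exp α → Prop
  | refl (e) : CA e e
  | symm {e f} : CA e f → CA f e
  | trans {e f g} : CA e f → CA f g → CA e g
  | congPlus {e e' f f'} : CA e e' → CA f f' → CA (.plus e f) (.plus e' f')
  | congTimes {e e' f f'} : CA e e' → CA f f' → CA (.times e f) (.times e' f')
  | plusAssoc (e f g) : CA (.plus (.plus e f) g) (.plus e (.plus f g))
  | plusComm (e f) : CA (.plus e f) (.plus f e)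
  | plusIdem (e) : CA (.plus e e) e
  | plusZero (e) : CA (.plus e .zero) e
  | timesAssoc (e f g) : CA (.times (.times e f) g) (.times e (.times f g))
  | timesOne (e) : CA (.times e .one) e
  | oneTimes (e) : CA (.times .one e) e
  | timesZero (e) : CA (.times e .zero) .zero
  | zeroTimes (e) : CA (.times .zero e) .zero
  | distL (e f g) : CA (.times e (.plus f g)) (.plus (.times e f) (.times e g))
  | distR (e f g) : CA (.times (.plus e f) g) (.plus (.times e g) (.times f g))
  | muContLe (e f g : Exp α) (n : ℕ) :
      CA (.plus (.times e (.times (Exp.iter f n) g)) (.times e (.times (.mu f) g)))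
         (.times e (.times (.mu f) g))
  | muContSup (e f g h : Exp α) :
      (∀ n : ℕ, CA (.plus (.times e (.times (Exp.iter f n) g)) h) h) →
      CA (.plus (.times e (.times (.mu f) g)) h) h

/-- the natural order `e ≤ f` of `μCA`, i.e. `e + f = f`. -/
def CAle {α : Type} (e f : Exp α) : Prop := CA (.plus e f) f

/-- the product `∏Γ` of a cedent as an expression. -/
def prodCed {α} (Γ : Cedent α) : Exp α := Γ.foldr .times .one

/-- the sum `Σ_{Δ∈S} ∏Δ` of a RHS as an expression. -/
noncomputable def sumRHS {α} (S : RHSet α) : Exp α := (S.toList.map prodCed).foldr .plus .zero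

variable {α : Type}

/-! ### Simultaneous substitution of closed expressions -/

/-- Prepend `g` to a sequence of expressions. -/
def consSub (g : Exp α) (σ : ℕ → Exp α) : ℕ → Exp α
  | 0 => g
  | n + 1 => σ n

/-- Replace the variables `k, k+1, …` of an expression by `σ 0, σ 1, …`. There is no shifting
under binders, so this is substitution only if all `σ i` are closed. -/
def inst (σ : ℕ → Exp α) : ℕ → Exp α → Exp α
  | _, .zero => .zero
  | _, .one => .one
  | k, .var n => if n < k then .var n else σ (n - k)
  | _, .tok a => .tok a
  | k, .plus e f => .plus (inst σ k e) (inst σ k f)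
  | k, .times e f => .times (inst σ k e) (inst σ k f)
  | k, .mu e => .mu (inst σ (k + 1) e)

theorem Exp.ClosedUnder.mono {e : Exp α} : ∀ {k l : ℕ}, k ≤ l → e.ClosedUnder k →
    e.ClosedUnder l := by
  induction e with
  | zero | one | tok => intros; trivial
  | var n => intro k l hkl h; exact lt_of_lt_of_le h hkl
  | plus e f ihe ihf | times e f ihe ihf => exact fun hkl h => ⟨ihe hkl h.1, ihf hkl h.2⟩
  | mu e ih => intro k l hkl h; exact ih (k := k + 1) (Nat.succ_le_succ hkl) h

theorem subst_eq_self {g e : Exp α} : ∀ {k : ℕ}, e.ClosedUnder k → Exp.subst g k e = e := by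
  induction e with
  | zero | one | tok => intros; rfl
  | var n => intro k h; exact if_neg (ne_of_lt h)
  | plus e f ihe ihf | times e f ihe ihf => intro k h; simp [Exp.subst, ihe h.1, ihf h.2]
  | mu e ih => intro k h; simp [Exp.subst, ih (k := k + 1) h]

theorem inst_eq_self {σ : ℕ → Exp α} {e : Exp α} :
    ∀ {k : ℕ}, e.ClosedUnder k → inst σ k e = e := by
  induction e with
  | zero | one | tok => intros; rfl
  | var n => intro k h; exact if_pos h
  | plus e f ihe ihf | times e f ihe ihf => intro k h; simp [inst, ihe h.1, ihf h.2]
  | mu e ih => intro k h; simp [inst, ih (k := k + 1) h]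

theorem closedUnder_inst {σ : ℕ → Exp α} (hσ : ∀ i, (σ i).Closed) (e : Exp α) :
    ∀ k, (inst σ k e).ClosedUnder k := by
  induction e with
  | zero | one | tok => intros; trivial
  | var n =>
    intro k
    by_cases h : n < k
    · simp only [inst, h, if_true]
      exact h
    · simpa [inst, h] using (hσ (n - k)).mono (Nat.zero_le k)
  | plus e f ihe ihf | times e f ihe ihf => exact fun k => ⟨ihe k, ihf k⟩
  | mu e ih => exact fun k => ih (k + 1)

theorem subst_inst {σ : ℕ → Exp α} (hσ : ∀ i, (σ i).Closed) (g e : Exp α) :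
    ∀ k, Exp.subst g k (inst σ (k + 1) e) = inst (consSub g σ) k e := by
  induction e with
  | zero | one | tok => intros; rfl
  | var n =>
    intro k
    rcases lt_trichotomy n k with h | h | h
    · simp [inst, Exp.subst, h, h.ne, Nat.lt_succ_of_lt h]
    · simp [inst, Exp.subst, h, consSub]
    · obtain ⟨m, rfl⟩ := Nat.exists_eq_add_of_lt h
      have h1 : ¬ k + m + 1 < k + 1 := by omega
      have h2 : ¬ k + m + 1 < k := by omega
      have h3 : k + m + 1 - (k + 1) = m := by omega
      have h4 : k + m + 1 - k = m + 1 := by omega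
      simp only [inst, h1, h2, if_false, h3, h4, consSub]
      exact subst_eq_self ((hσ m).mono (Nat.zero_le k))
  | plus e f ihe ihf | times e f ihe ihf => intro k; simp [inst, Exp.subst, ihe, ihf]
  | mu e ih => intro k; simp [inst, Exp.subst, ih]

theorem closed_consSub {σ : ℕ → Exp α} (hσ : ∀ i, (σ i).Closed) {g : Exp α} (hg : g.Closed) :
    ∀ i, (consSub g σ i).Closed
  | 0 => hg
  | i + 1 => hσ i

theorem iter_succ_inst {σ : ℕ → Exp α} (hσ : ∀ i, (σ i).Closed) (e : Exp α) (n : ℕ) :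
    Exp.iter (inst σ 1 e) (n + 1) = inst (consSub (Exp.iter (inst σ 1 e) n) σ) 0 e :=
  subst_inst hσ _ e 0

theorem closed_iter_inst {σ : ℕ → Exp α} (hσ : ∀ i, (σ i).Closed) (e : Exp α) :
    ∀ n, (Exp.iter (inst σ 1 e) n).Closed
  | 0 => trivial
  | n + 1 => by
    rw [iter_succ_inst hσ]
    exact closedUnder_inst (closed_consSub hσ (closed_iter_inst hσ e n)) e 0

/-! ### Monotonicity and continuity of the semantics -/

theorem consEnv_mono {A B : Language α} {ρ τ : ℕ → Language α} (hA : A ≤ B)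
    (h : ∀ i, ρ i ≤ τ i) : ∀ i, consEnv A ρ i ≤ consEnv B τ i
  | 0 => hA
  | i + 1 => h i

theorem sem_mono {e : Exp α} : ∀ {ρ τ : ℕ → Language α}, (∀ i, ρ i ≤ τ i) →
    sem ρ e ≤ sem τ e := by
  induction e with
  | zero | one | tok => intros; exact le_rfl
  | var n => exact fun h => h n
  | plus e f ihe ihf => exact fun h => add_le_add (ihe h) (ihf h)
  | times e f ihe ihf => exact fun h => mul_le_mul' (ihe h) (ihf h)
  | mu e ih =>
    intro ρ τ h
    exact le_sInf fun A hA => sInf_le ((ih (consEnv_mono le_rfl h)).trans hA)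

theorem sem_mu_prefixed (ρ : ℕ → Language α) (e : Exp α) :
    sem (consEnv (sem ρ (.mu e)) ρ) e ≤ sem ρ (.mu e) :=
  le_sInf fun _ hA => (sem_mono (consEnv_mono (sInf_le hA) fun _ => le_rfl)).trans hA

/-- `ω`-continuity of the semantics along a chain of environments. -/
theorem exists_mem_sem {e : Exp α} : ∀ {ρ : ℕ → ℕ → Language α} {τ : ℕ → Language α},
    (∀ m n, m ≤ n → ∀ i, ρ m i ≤ ρ n i) → (∀ i, ∀ w ∈ τ i, ∃ n, w ∈ ρ n i) →
    ∀ w ∈ sem τ e, ∃ n, w ∈ sem (ρ n) e := by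
  induction e with
  | zero | one | tok => exact fun _ _ w hw => ⟨0, hw⟩
  | var i => exact fun _ h w hw => h i w hw
  | plus e f ihe ihf =>
    rintro ρ τ hρ h w (hw | hw)
    · exact (ihe hρ h w hw).imp fun _ => Or.inl
    · exact (ihf hρ h w hw).imp fun _ => Or.inr
  | times e f ihe ihf =>
    rintro ρ τ hρ h w hw
    obtain ⟨u, hu, v, hv, rfl⟩ := Language.mem_mul.1 hw
    obtain ⟨m, hm⟩ := ihe hρ h u hu
    obtain ⟨n, hn⟩ := ihf hρ h v hv
    exact ⟨max m n, Language.mem_mul.2 ⟨u, sem_mono (hρ _ _ (le_max_left m n)) hm, v,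
      sem_mono (hρ _ _ (le_max_right m n)) hn, rfl⟩⟩
  | mu e ih =>
    intro ρ τ hρ h
    -- the union of the fixed points along the chain is prefixed for the limit environment
    let A : Language α := {w | ∃ n, w ∈ sem (ρ n) (.mu e)}
    have key : sem (consEnv A τ) e ≤ A := by
      intro w hw
      obtain ⟨n, hn⟩ := ih (ρ := fun n => consEnv (sem (ρ n) (.mu e)) (ρ n)) (τ := consEnv A τ)
        (fun m n hmn => consEnv_mono (sem_mono (hρ m n hmn)) (hρ m n hmn))
        (fun i => match i with
          | 0 => fun w hw => hw
          | i + 1 => h i) w hw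
      exact ⟨n, sem_mu_prefixed _ _ hn⟩
    exact fun w hw => (sInf_le key : sem τ (.mu e) ≤ A) hw

/-- The `n`-th iterate of `A ↦ ⟦e⟧(A)` from the empty language. -/
def semIter (ρ : ℕ → Language α) (e : Exp α) : ℕ → Language α
  | 0 => 0
  | n + 1 => sem (consEnv (semIter ρ e n) ρ) e

theorem semIter_mono (ρ : ℕ → Language α) (e : Exp α) : Monotone (semIter ρ e) := by
  refine monotone_nat_of_le_succ fun n => ?_
  induction n with
  | zero => exact fun w hw => absurd hw (Language.notMem_zero w)
  | succ n ih => exact sem_mono (consEnv_mono ih fun _ => le_rfl)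

theorem exists_mem_semIter {ρ : ℕ → Language α} {e : Exp α} {w : List α}
    (hw : w ∈ sem ρ (.mu e)) : ∃ n, w ∈ semIter ρ e n := by
  let A : Language α := {w | ∃ n, w ∈ semIter ρ e n}
  have key : sem (consEnv A ρ) e ≤ A := by
    intro w hw
    obtain ⟨n, hn⟩ := exists_mem_sem (ρ := fun n => consEnv (semIter ρ e n) ρ)
      (τ := consEnv A ρ)
      (fun m n hmn => consEnv_mono (semIter_mono ρ e hmn) fun _ => le_rfl)
      (fun i => match i with
        | 0 => fun w hw => hw
        | i + 1 => fun w hw => ⟨0, hw⟩) w hw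
    exact ⟨n + 1, hn⟩
  exact (sInf_le key : sem ρ (.mu e) ≤ A) hw

/-! ### Completeness of the sequent calculus -/

/-- A word as a cedent of letters. -/
def toks (w : List α) : Cedent α := w.map .tok

theorem toks_append (u v : List α) : toks (u ++ v) = toks u ++ toks v := List.map_append

section Sequent

variable [DecidableEq α]

/-- A left occurrence of `e` may be replaced, in every context, by all words of `A`. -/
def LeftGood (A : Language α) (e : Exp α) : Prop :=
  ∀ (Γ Γ' : Cedent α) (S : RHSet α), (∀ w ∈ A, DerivW ⟨Γ ++ (toks w ++ Γ'), S⟩) →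
    DerivW ⟨Γ ++ e :: Γ', S⟩

theorem LeftGood.mono {A B : Language α} {e : Exp α} (hA : LeftGood A e) (h : A ≤ B) :
    LeftGood B e := fun Γ Γ' S H => hA Γ Γ' S fun w hw => H w (h hw)

theorem leftGood_zero (A : Language α) : LeftGood A .zero := fun Γ Γ' S _ =>
  .rule (.zeroL Γ Γ' S) (by simp [Rule.prems])

/-- Every expression is derivable on the left from the words of its language. In the case `μX e`
the `ω`-rule leaves the approximants, each of which is covered by the words of the fixed point. -/
theorem leftGood_inst (e : Exp α) : ∀ {σ : ℕ → Exp α} {ρ : ℕ → Language α},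
    (∀ i, (σ i).Closed) → (∀ i, LeftGood (ρ i) (σ i)) → LeftGood (sem ρ e) (inst σ 0 e) := by
  induction e with
  | zero => exact fun _ _ => leftGood_zero _
  | one =>
    intro σ ρ _ _ Γ Γ' S H
    refine .rule (.oneL Γ Γ' S) ?_
    simpa [Rule.prems, toks] using H [] Language.nil_mem_one
  | var n => exact fun _ h => by simpa [inst, sem] using h n
  | tok a =>
    intro σ ρ _ _ Γ Γ' S H
    simpa [toks, inst] using H [a] rfl
  | plus e f ihe ihf =>
    intro σ ρ hσ h Γ Γ' S H
    refine .rule (.plusL Γ (inst σ 0 e) (inst σ 0 f) Γ' S) ?_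
    simp only [Rule.prems, List.forall_mem_cons, List.not_mem_nil, false_implies, implies_true,
      and_true]
    exact ⟨ihe hσ h Γ Γ' S fun w hw => H w (Or.inl hw),
      ihf hσ h Γ Γ' S fun w hw => H w (Or.inr hw)⟩
  | times e f ihe ihf =>
    intro σ ρ hσ h Γ Γ' S H
    refine .rule (.timesL Γ (inst σ 0 e) (inst σ 0 f) Γ' S) ?_
    simp only [Rule.prems, List.forall_mem_cons, List.not_mem_nil, false_implies, implies_true,
      and_true]
    refine ihe hσ h Γ _ S fun u hu => ?_
    rw [← List.append_assoc]
    refine ihf hσ h _ Γ' S fun v hv => ?_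
    simpa [toks_append] using H (u ++ v) (Language.append_mem_mul hu hv)
  | mu e ih =>
    intro σ ρ hσ h Γ Γ' S H
    refine .omega Γ (inst σ 1 e) Γ' S fun n => ?_
    suffices hn : LeftGood (sem ρ (.mu e)) (Exp.iter (inst σ 1 e) n) from hn Γ Γ' S H
    induction n with
    | zero => exact leftGood_zero _
    | succ n ihn =>
      rw [iter_succ_inst hσ]
      refine LeftGood.mono (ih (ρ := consEnv (sem ρ (.mu e)) ρ)
        (closed_consSub hσ (closed_iter_inst hσ e n)) ?_) (sem_mu_prefixed ρ e)
      rintro (_ | i)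
      exacts [ihn, h i]

/-- The words by which a right occurrence of `e` may be replaced in every context. -/
def rightLang (e : Exp α) : Language α :=
  {w | ∀ Γ Δ Δ' : Cedent α, DerivW ⟨Γ, {Δ ++ (toks w ++ Δ')}⟩ → DerivW ⟨Γ, {Δ ++ e :: Δ'}⟩}

theorem DerivW.weaken {Γ Δ : Cedent α} {S : RHSet α} (h : DerivW ⟨Γ, S⟩) :
    DerivW ⟨Γ, insert Δ S⟩ :=
  .rule (.wr Γ S Δ) (by simpa [Rule.prems] using h)

/-- Every word of the language of an expression can be expanded to it on the right. -/
theorem sem_le_rightLang (e : Exp α) : ∀ {σ : ℕ → Exp α} {ρ : ℕ → Language α},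
    (∀ i, (σ i).Closed) → (∀ i, ρ i ≤ rightLang (σ i)) →
    sem ρ e ≤ rightLang (inst σ 0 e) := by
  induction e with
  | zero => exact fun _ _ w hw => absurd hw (Language.notMem_zero w)
  | one =>
    intro σ ρ _ _ w hw Γ Δ Δ' H
    obtain rfl : w = [] := hw
    exact .rule (.oneR Γ ∅ Δ Δ') (by simpa [Rule.prems, toks] using H)
  | var n => exact fun _ h => by simpa [inst, sem] using h n
  | tok a =>
    intro σ ρ _ _ w hw Γ Δ Δ' H
    obtain rfl : w = [a] := hw
    simpa [toks, inst] using H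
  | plus e f ihe ihf =>
    intro σ ρ hσ h w hw Γ Δ Δ' H
    refine .rule (.plusR Γ ∅ Δ (inst σ 0 e) (inst σ 0 f) Δ') ?_
    simp only [Rule.prems, List.forall_mem_cons, List.not_mem_nil, false_implies, implies_true,
      and_true]
    rcases hw with hw | hw
    · rw [Finset.insert_comm]
      exact (ihe hσ h hw Γ Δ Δ' H).weaken
    · exact (ihf hσ h hw Γ Δ Δ' H).weaken
  | times e f ihe ihf =>
    intro σ ρ hσ h w hw Γ Δ Δ' H
    obtain ⟨u, hu, v, hv, rfl⟩ := Language.mem_mul.1 hw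
    refine .rule (.timesR Γ ∅ Δ (inst σ 0 e) (inst σ 0 f) Δ') ?_
    simp only [Rule.prems, List.forall_mem_cons, List.not_mem_nil, false_implies, implies_true,
      and_true]
    refine ihe hσ h hu Γ Δ _ ?_
    rw [← List.append_assoc]
    refine ihf hσ h hv Γ _ Δ' ?_
    simpa [toks_append] using H
  | mu e ih =>
    intro σ ρ hσ h
    refine sInf_le (show sem (consEnv _ ρ) e ≤ _ from ?_)
    have hmu : (Exp.mu (inst σ 1 e)).Closed := closedUnder_inst hσ (.mu e) 0
    refine (ih (closed_consSub hσ hmu) ?_).trans fun w hw Γ Δ Δ' H => ?_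
    · rintro (_ | i)
      exacts [le_rfl, h i]
    · refine .rule (.muR Γ ∅ Δ (inst σ 1 e) Δ') ?_
      simp only [Rule.prems, List.forall_mem_cons, List.not_mem_nil, false_implies,
        implies_true, and_true, Exp.unfold, subst_inst hσ]
      exact hw Γ Δ Δ' H

theorem derivW_toks (w : List α) : DerivW ⟨toks w, {toks w}⟩ := by
  induction w with
  | nil => exact .rule .init (by simp [Rule.prems])
  | cons a w ih => exact .rule (.kl a (toks w) {toks w}) (by simpa [Rule.prems] using ih)

theorem derivW_of_langOf_le {e f : Exp α} (hce : e.Closed) (hcf : f.Closed)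
    (h : langOf e ≤ langOf f) : DerivW ⟨[e], {[f]}⟩ := by
  have he : LeftGood (langOf e) e := by
    simpa only [langOf, inst_eq_self hce] using leftGood_inst e (σ := fun _ => .zero) (ρ := fun _ => 0)
      (fun _ => trivial) fun _ => leftGood_zero _
  have hf : langOf f ≤ rightLang f := by
    simpa only [langOf, inst_eq_self hcf] using sem_le_rightLang f (σ := fun _ => .zero)
      (ρ := fun _ => 0) (fun _ => trivial) fun _ w hw => absurd hw (Language.notMem_zero w)
  refine he [] [] _ fun w hw => ?_
  exact hf (h hw) _ [] [] (by simpa using derivW_toks w)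

end Sequent

/-! ### Completeness of the equational theory -/

/-- Provable equality in `μCA`. -/
def caSetoid (α : Type) : Setoid (Exp α) := ⟨CA, CA.refl, CA.symm, CA.trans⟩

/-- Expressions modulo `μCA`. -/
def CAQuot (α : Type) : Type := Quotient (caSetoid α)

/-- The class of an expression modulo `μCA`. -/
def cls (e : Exp α) : CAQuot α := Quotient.mk (caSetoid α) e

theorem cls_eq {e f : Exp α} : cls e = cls f ↔ CA e f :=
  Quotient.eq (r := caSetoid α)

theorem cls_surjective : Function.Surjective (cls (α := α)) := Quotient.exists_rep

instance : Zero (CAQuot α) := ⟨cls .zero⟩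
instance : One (CAQuot α) := ⟨cls .one⟩
instance : Add (CAQuot α) :=
  ⟨Quotient.map₂ Exp.plus fun _ _ h _ _ h' => CA.congPlus h h'⟩
instance : Mul (CAQuot α) :=
  ⟨Quotient.map₂ Exp.times fun _ _ h _ _ h' => CA.congTimes h h'⟩

theorem cls_zero : cls (.zero : Exp α) = 0 := rfl
theorem cls_one : cls (.one : Exp α) = 1 := rfl
theorem cls_plus (e f : Exp α) : cls (.plus e f) = cls e + cls f := rfl
theorem cls_times (e f : Exp α) : cls (.times e f) = cls e * cls f := rfl

instance : Semiring (CAQuot α) where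
  add_assoc := by
    simp only [cls_surjective.forall]; exact fun e f g => cls_eq.2 (.plusAssoc e f g)
  zero_add := by
    simp only [cls_surjective.forall]
    exact fun e => cls_eq.2 ((CA.plusComm _ _).trans (.plusZero e))
  add_zero := by simp only [cls_surjective.forall]; exact fun e => cls_eq.2 (.plusZero e)
  add_comm := by simp only [cls_surjective.forall]; exact fun e f => cls_eq.2 (.plusComm e f)
  left_distrib := by
    simp only [cls_surjective.forall]; exact fun e f g => cls_eq.2 (.distL e f g)
  right_distrib := by
    simp only [cls_surjective.forall]; exact fun e f g => cls_eq.2 (.distR e f g)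
  zero_mul := by simp only [cls_surjective.forall]; exact fun e => cls_eq.2 (.zeroTimes e)
  mul_zero := by simp only [cls_surjective.forall]; exact fun e => cls_eq.2 (.timesZero e)
  mul_assoc := by
    simp only [cls_surjective.forall]; exact fun e f g => cls_eq.2 (.timesAssoc e f g)
  one_mul := by simp only [cls_surjective.forall]; exact fun e => cls_eq.2 (.oneTimes e)
  mul_one := by simp only [cls_surjective.forall]; exact fun e => cls_eq.2 (.timesOne e)
  nsmul := nsmulRec
  npow := npowRec

instance : IdemSemiring (CAQuot α) := .ofSemiring <| by
  simp only [cls_surjective.forall]; exact fun e => cls_eq.2 (.plusIdem e)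

theorem cls_le {e f : Exp α} : cls e ≤ cls f ↔ CAle e f :=
  add_eq_right_iff_le.symm.trans cls_eq

theorem mul_iter_le_mul_mu (x y : CAQuot α) (e : Exp α) (n : ℕ) :
    x * (cls (.iter e n) * y) ≤ x * (cls (.mu e) * y) := by
  obtain ⟨x, rfl⟩ := cls_surjective x
  obtain ⟨y, rfl⟩ := cls_surjective y
  exact cls_le.2 (CA.muContLe x e y n)

theorem mul_mu_le {x y z : CAQuot α} {e : Exp α}
    (h : ∀ n, x * (cls (.iter e n) * y) ≤ z) : x * (cls (.mu e) * y) ≤ z := by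
  obtain ⟨x, rfl⟩ := cls_surjective x
  obtain ⟨y, rfl⟩ := cls_surjective y
  obtain ⟨z, rfl⟩ := cls_surjective z
  exact cls_le.2 (CA.muContSup x e y z fun n => cls_le.1 (h n))

/-- The class of a word. -/
def wcls (w : List α) : CAQuot α := (w.map fun a => cls (.tok a)).prod

theorem wcls_append (u v : List α) : wcls (u ++ v) = wcls u * wcls v := by
  simp [wcls]

/-- In every multiplicative context, `e` is at most the supremum of the words of `A`. -/
def BelowWords (A : Language α) (e : Exp α) : Prop :=
  ∀ x y z : CAQuot α, (∀ w ∈ A, x * (wcls w * y) ≤ z) → x * (cls e * y) ≤ z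

theorem BelowWords.mono {A B : Language α} {e : Exp α} (hA : BelowWords A e) (h : A ≤ B) :
    BelowWords B e := fun x y z H => hA x y z fun w hw => H w (h hw)

theorem belowWords_zero (A : Language α) : BelowWords A .zero := fun x y z _ => by
  simp [cls_zero]

/-- The analogue of `leftGood_inst` for `μCA`, with `μ`-continuity in place of the `ω`-rule. -/
theorem belowWords_inst (e : Exp α) : ∀ {σ : ℕ → Exp α} {ρ : ℕ → Language α},
    (∀ i, (σ i).Closed) → (∀ i, BelowWords (ρ i) (σ i)) →
    BelowWords (sem ρ e) (inst σ 0 e) := by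
  induction e with
  | zero => exact fun _ _ => belowWords_zero _
  | one =>
    intro σ ρ _ _ x y z H
    simpa [wcls, inst, cls_one] using H [] Language.nil_mem_one
  | var n => exact fun _ h => by simpa [inst, sem] using h n
  | tok a =>
    intro σ ρ _ _ x y z H
    simpa [wcls, inst] using H [a] rfl
  | plus e f ihe ihf =>
    intro σ ρ hσ h x y z H
    rw [inst, cls_plus, add_mul, mul_add, add_eq_sup]
    exact sup_le (ihe hσ h x y z fun w hw => H w (Or.inl hw))
      (ihf hσ h x y z fun w hw => H w (Or.inr hw))
  | times e f ihe ihf =>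
    intro σ ρ hσ h x y z H
    rw [inst, cls_times, mul_assoc]
    refine ihe hσ h x _ z fun u hu => ?_
    rw [← mul_assoc]
    refine ihf hσ h _ y z fun v hv => ?_
    simpa [wcls_append, mul_assoc] using H (u ++ v) (Language.append_mem_mul hu hv)
  | mu e ih =>
    intro σ ρ hσ h x y z H
    refine mul_mu_le fun n => ?_
    suffices hn : BelowWords (sem ρ (.mu e)) (Exp.iter (inst σ 1 e) n) from hn x y z H
    induction n with
    | zero => exact belowWords_zero _
    | succ n ihn =>
      rw [iter_succ_inst hσ]
      refine BelowWords.mono (ih (ρ := consEnv (sem ρ (.mu e)) ρ)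
        (closed_consSub hσ (closed_iter_inst hσ e n)) ?_) (sem_mu_prefixed ρ e)
      rintro (_ | i)
      exacts [ihn, h i]

/-- Every word of the language of an expression is provably below it in `μCA`. -/
theorem wcls_le_inst (e : Exp α) : ∀ {σ : ℕ → Exp α} {ρ : ℕ → Language α},
    (∀ i, (σ i).Closed) → (∀ i, ∀ w ∈ ρ i, wcls w ≤ cls (σ i)) →
    ∀ w ∈ sem ρ e, wcls w ≤ cls (inst σ 0 e) := by
  induction e with
  | zero => exact fun _ _ w hw => absurd hw (Language.notMem_zero w)
  | one =>
    intro σ ρ _ _ w hw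
    obtain rfl : w = [] := hw
    exact le_rfl
  | var n => exact fun _ h => by simpa [inst, sem] using h n
  | tok a =>
    intro σ ρ _ _ w hw
    obtain rfl : w = [a] := hw
    simp [wcls, inst]
  | plus e f ihe ihf =>
    intro σ ρ hσ h w hw
    rw [inst, cls_plus, add_eq_sup]
    rcases hw with hw | hw
    · exact le_sup_of_le_left (ihe hσ h w hw)
    · exact le_sup_of_le_right (ihf hσ h w hw)
  | times e f ihe ihf =>
    intro σ ρ hσ h w hw
    obtain ⟨u, hu, v, hv, rfl⟩ := Language.mem_mul.1 hw
    rw [wcls_append, inst, cls_times]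
    exact mul_le_mul' (ihe hσ h u hu) (ihf hσ h v hv)
  | mu e ih =>
    intro σ ρ hσ h w hw
    have key : ∀ n, ∀ w ∈ semIter ρ e n, wcls w ≤ cls (Exp.iter (inst σ 1 e) n) := by
      intro n
      induction n with
      | zero => exact fun w hw => absurd hw (Language.notMem_zero w)
      | succ n ihn =>
        rw [iter_succ_inst hσ]
        refine ih (closed_consSub hσ (closed_iter_inst hσ e n)) ?_
        rintro (_ | i)
        exacts [ihn, h i]
    obtain ⟨n, hn⟩ := exists_mem_semIter hw
    have hle := mul_iter_le_mul_mu 1 1 (inst σ 1 e) n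
    simp only [one_mul, mul_one] at hle
    exact (key n w hn).trans hle

theorem caLe_of_langOf_le {e f : Exp α} (hce : e.Closed) (hcf : f.Closed)
    (h : langOf e ≤ langOf f) : CAle e f := by
  have he : BelowWords (langOf e) e := by
    simpa only [langOf, inst_eq_self hce] using belowWords_inst e (σ := fun _ => .zero)
      (ρ := fun _ => 0) (fun _ => trivial) fun _ => belowWords_zero _
  have hf : ∀ w ∈ langOf f, wcls w ≤ cls f := by
    simpa only [langOf, inst_eq_self hcf] using wcls_le_inst f (σ := fun _ => .zero)
      (ρ := fun _ => 0) (fun _ => trivial) fun _ w hw => absurd hw (Language.notMem_zero w)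
  have key := he 1 1 (cls f) fun w hw => by simpa using hf w (h hw)
  exact cls_le.1 (by simpa using key)

/-- Corollary 4.3: for closed guarded `e`, `f`, if
`L(e) ⊆ L(f)` then `μHKA_ω` derives `e → [f]` by a wellfounded proof, and
consequently `μCA` derives `e ≤ f`. -/
theorem completeness_muHKA_omega_and_CA {α : Type} [Fintype α] [DecidableEq α] (e f : Exp α)
    (hce : e.Closed) (hcf : f.Closed) (hge : e.Guarded) (hgf : f.Guarded)
    (h : langOf e ≤ langOf f) :
    DerivW (⟨[e], {[f]}⟩ : Sqt α) ∧ CAle e f :=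
  ⟨derivW_of_langOf_le hce hcf h, caLe_of_langOf_le hce hcf h⟩

end CFPT
end

section
/- Characterisation of progress via threads: a μHKA preproof P is progressing (every infinite branch has infinitely many μ-l steps) if and only if every infinite branch of P carries a progressing thread, i.e., a maximal path in the immediate-ancestry graph on the LHS that is principal for a μ-l step infinitely often. -/
/-!
The direction from threads to progress is immediate. For the converse, fix a branch with infinitely
many `μ-l` steps. Immediate ancestry turns the LHS occurrences along the branch into a forest in
which every level is finite and every occurrence has a unique parent at the level below. Call an
occurrence *rich* if infinitely many principal `μ-l` occurrences descend from it. By the pigeonhole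
principle the endsequent contains a rich occurrence (`exists_rich_zero`) and every rich occurrence
has a rich child (`Rich.exists_child`), so there is an infinite thread of rich occurrences.

This thread is progressing. A child of an occurrence that is not principal for `μ-l` is either
strictly smaller than its parent, or of the same size and the only child (`Rule.step`). If the
thread were principal for `μ-l` only finitely often, formula sizes along it would eventually be
constant, so from some point on the thread would contain all descendants of its members, none of
them principal for `μ-l`; this contradicts richness.
-/

namespace CFPT

/-- a progressing thread along the infinite branch `b` of `P`: from some point
`k` on, a maximal path `τ` in the immediate-ancestry graph on the LHS which is
principal for a `μ-l` step infinitely often. -/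
def HasProgThread {α : Type} [DecidableEq α] (P : Preproof α) (b : ℕ → ℕ) : Prop :=
  ∃ (k : ℕ) (τ : ℕ → ℕ),
    (∀ n, k ≤ n → ∃ r, P.rule (Preproof.pathOf b n) = some r ∧
      τ n < r.concl.lhs.length ∧ r.ancL (τ (n + 1)) = τ n) ∧
    (∀ N, ∃ n, N ≤ n ∧ k ≤ n ∧ ∃ r, P.rule (Preproof.pathOf b n) = some r ∧
      r.IsPrincMuL (τ n))

/-! ### Ancestry across a single rule instance -/

namespace Rule

variable {α : Type} [DecidableEq α]

/-- The size of the formula at position `j` of a cedent, and `0` if `j` is out of range. -/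
noncomputable def sizeAt (Γ : Cedent α) (j : ℕ) : ℕ := (Γ[j]?.map sizeOf).getD 0

/-- Local analysis of ancestry: unless the parent is principal for `μ-l`, a child is either
strictly smaller than its parent or is its only child, of the same size. -/
theorem step (r : Rule α) (s : Sqt α) (hs : s ∈ r.prems) (j : ℕ) (hj : j < s.lhs.length) :
    r.ancL j < r.concl.lhs.length ∧
      (r.IsPrincMuL (r.ancL j) ∨ sizeAt s.lhs j < sizeAt r.concl.lhs (r.ancL j) ∨
        (sizeAt s.lhs j = sizeAt r.concl.lhs (r.ancL j) ∧
          ∀ j', r.ancL j' = r.ancL j → j' = j)) := by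
  cases r with
  | init => simp [prems] at hs
  | zeroL => simp [prems] at hs
  | plusL Γ e f Γ' S =>
    simp only [prems, List.mem_cons, List.not_mem_nil, or_false] at hs
    rcases hs with rfl | rfl <;>
    · simp only [List.length_append, List.length_cons] at hj
      refine ⟨by simpa [concl, ancL] using hj, Or.inr ?_⟩
      rcases lt_trichotomy j Γ.length with h | h | h
      · right; simp [sizeAt, concl, ancL, List.getElem?_append, h]
      · left; simp [sizeAt, concl, ancL, h]; try omega
      · right
        obtain ⟨k, rfl⟩ := Nat.exists_eq_add_of_lt h
        simp [sizeAt, concl, ancL, List.getElem?_append, add_assoc]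
  | muL Γ e Γ' S =>
    simp only [prems, List.mem_cons, List.not_mem_nil, or_false] at hs
    subst hs
    simp only [List.length_append, List.length_cons] at hj
    refine ⟨by simpa [concl, ancL] using hj, ?_⟩
    rcases lt_trichotomy j Γ.length with h | h | h
    · right; right; simp [sizeAt, concl, ancL, List.getElem?_append, h]
    · left; simpa [IsPrincMuL, ancL] using h
    · right; right
      obtain ⟨k, rfl⟩ := Nat.exists_eq_add_of_lt h
      simp [sizeAt, concl, ancL, List.getElem?_append, add_assoc]
  | oneL Γ Γ' S =>
    simp only [prems, List.mem_cons, List.not_mem_nil, or_false] at hs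
    subst hs
    simp only [List.length_append] at hj
    refine ⟨by simp only [concl, ancL, List.length_append, List.length_cons]; split <;> omega,
      Or.inr (Or.inr ⟨?_, ?_⟩)⟩
    · rcases lt_or_ge j Γ.length with h | h
      · simp [sizeAt, concl, ancL, List.getElem?_append, h]
      · obtain ⟨k, rfl⟩ := Nat.exists_eq_add_of_le h
        simp [sizeAt, concl, ancL, List.getElem?_append, add_assoc]
    · intro j' h
      simp only [ancL] at h
      split at h <;> split at h <;> omega
  | timesL Γ e f Γ' S =>
    simp only [prems, List.mem_cons, List.not_mem_nil, or_false] at hs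
    subst hs
    simp only [List.length_append, List.length_cons] at hj
    refine ⟨by
      simp only [concl, ancL, List.length_append, List.length_cons]
      split
      · omega
      · split <;> omega, Or.inr ?_⟩
    rcases lt_or_ge j Γ.length with h | h
    · right
      refine ⟨by simp [sizeAt, concl, ancL, List.getElem?_append, h], fun j' h' => ?_⟩
      simp only [ancL] at h'
      grind
    · obtain ⟨k, rfl⟩ := Nat.exists_eq_add_of_le h
      match k with
      | 0 => left; simp [sizeAt, concl, ancL]; try omega
      | 1 => left; simp [sizeAt, concl, ancL]; try omega
      | k + 2 =>
        right
        refine ⟨by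
          have h1 : ¬ Γ.length + (k + 2) < Γ.length := by omega
          have h2 : ¬ Γ.length + (k + 2) ≤ Γ.length + 1 := by omega
          have h3 : Γ.length + (k + 2) - 1 = Γ.length + (k + 1) := by omega
          simp [sizeAt, concl, ancL, List.getElem?_append, h2, h3], fun j' h' => ?_⟩
        simp only [ancL] at h'
        grind
  | kr a Γ S =>
    simp only [prems, List.mem_cons, List.not_mem_nil, or_false] at hs
    subst hs
    refine ⟨by simp only [concl, ancL, List.length_append]; simp at hj; omega,
      Or.inr (Or.inr ⟨?_, fun j' h => h⟩)⟩
    simp at hj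
    simp [sizeAt, concl, ancL, List.getElem?_append, hj]
  | kl a Γ S =>
    simp only [prems, List.mem_cons, List.not_mem_nil, or_false] at hs
    subst hs
    exact ⟨by simpa [concl, ancL] using hj,
      Or.inr (Or.inr ⟨by simp [sizeAt, concl, ancL], fun j' h => by simpa [ancL] using h⟩)⟩
  | _ =>
    simp only [prems, List.mem_cons, List.not_mem_nil, or_false] at hs
    subst hs
    exact ⟨hj, Or.inr (Or.inr ⟨rfl, fun j' h => h⟩)⟩

theorem IsMuL.exists_princ {r : Rule α} (h : r.IsMuL) :
    ∃ j < r.concl.lhs.length, r.IsPrincMuL j := by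
  cases r <;> simp_all [IsMuL, IsPrincMuL, concl]

theorem IsPrincMuL.isMuL {r : Rule α} {j : ℕ} (h : r.IsPrincMuL j) : r.IsMuL := by
  cases r <;> simp_all [IsMuL, IsPrincMuL]

end Rule

/-! ### Rich occurrences along a branch -/

section Thread

variable {α : Type} [DecidableEq α]

open Filter

/-- The position at level `n` from which position `i` at level `n + k` descends, along a sequence
`R` of rule instances. -/
def ancestor (R : ℕ → Rule α) : ℕ → ℕ → ℕ → ℕ
  | _, 0, i => i
  | n, k + 1, i => (R n).ancL (ancestor R (n + 1) k i)

/-- Position `j` at level `n` is rich: principal `μ-l` occurrences descend from it at infinitely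
many levels. -/
def Rich (R : ℕ → Rule α) (n j : ℕ) : Prop :=
  ∃ᶠ k in atTop, ∃ i < (R (n + k)).concl.lhs.length,
    (R (n + k)).IsPrincMuL i ∧ ancestor R n k i = j

variable {R : ℕ → Rule α}

theorem ancestor_lt (hR : ∀ n, (R (n + 1)).concl ∈ (R n).prems)
    (k : ℕ) : ∀ n i, i < (R (n + k)).concl.lhs.length →
    ancestor R n k i < (R n).concl.lhs.length := by
  induction k with
  | zero => intro n i h; exact h
  | succ k ih =>
    intro n i h
    refine (Rule.step (R n) _ (hR n) _ (ih (n + 1) i ?_)).1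
    rwa [show n + 1 + k = n + (k + 1) by omega]

theorem Rich.lt (hR : ∀ n, (R (n + 1)).concl ∈ (R n).prems)
    {n j : ℕ} (h : Rich R n j) : j < (R n).concl.lhs.length := by
  obtain ⟨k, i, hi, -, rfl⟩ := h.exists
  exact ancestor_lt hR k n i hi

/-- Pigeonhole on the finitely many positions of one level. -/
theorem exists_rich (hR : ∀ n, (R (n + 1)).concl ∈ (R n).prems)
    {n : ℕ} {p : ℕ → Prop}
    (h : ∃ᶠ k in atTop, ∃ i < (R (n + k)).concl.lhs.length,
      (R (n + k)).IsPrincMuL i ∧ p (ancestor R n k i)) :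
    ∃ j, p j ∧ Rich R n j := by
  by_contra! hc
  have hev : ∀ j ∈ Finset.range (R n).concl.lhs.length, ∀ᶠ k in atTop,
      p j → ¬ ∃ i < (R (n + k)).concl.lhs.length,
        (R (n + k)).IsPrincMuL i ∧ ancestor R n k i = j := by
    intro j _
    by_cases hp : p j
    · exact (not_frequently.1 (hc j hp)).mono fun k hk _ => hk
    · exact Eventually.of_forall fun k hk => absurd hk hp
  rw [← eventually_all_finset] at hev
  obtain ⟨k, ⟨i, hi, hpr, hp⟩, hk⟩ := (h.and_eventually hev).exists
  exact hk _ (Finset.mem_range.2 (ancestor_lt hR k n i hi)) hp ⟨i, hi, hpr, rfl⟩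

theorem exists_rich_zero (hR : ∀ n, (R (n + 1)).concl ∈ (R n).prems)
    (h : ∃ᶠ n in atTop, (R n).IsMuL) : ∃ j, Rich R 0 j := by
  obtain ⟨j, -, hj⟩ := exists_rich hR (n := 0) (p := fun _ => True) <| h.mono fun k hk => by
    obtain ⟨i, hi, hpr⟩ := hk.exists_princ
    rw [← Nat.zero_add k] at hi hpr
    exact ⟨i, hi, hpr, trivial⟩
  exact ⟨j, hj⟩

theorem Rich.exists_child (hR : ∀ n, (R (n + 1)).concl ∈ (R n).prems)
    {n j : ℕ} (h : Rich R n j) :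
    ∃ j', (R n).ancL j' = j ∧ Rich R (n + 1) j' := by
  refine exists_rich hR (n := n + 1) (p := fun j' => (R n).ancL j' = j) ?_
  rw [frequently_atTop]
  intro N
  obtain ⟨k, hk, i, hi, hpr, hanc⟩ := frequently_atTop.1 h (N + 1)
  obtain ⟨k, rfl⟩ : ∃ m, k = m + 1 := ⟨k - 1, by omega⟩
  rw [show n + (k + 1) = n + 1 + k by omega] at hi hpr
  exact ⟨k, by omega, i, hi, hpr, hanc⟩

theorem exists_min_size (f : ℕ → ℕ) (N : ℕ) :
    ∃ M, N ≤ M ∧ ∀ n, N ≤ n → f M ≤ f n := by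
  obtain ⟨M, hM, hmin⟩ := (measure f).wf.has_min {n | N ≤ n} ⟨N, le_refl N⟩
  exact ⟨M, hM, fun n hn => not_lt.1 (hmin n hn)⟩

/-- A thread of rich occurrences is principal for `μ-l` infinitely often. -/
theorem princ_of_rich (hR : ∀ n, (R (n + 1)).concl ∈ (R n).prems)
    {τ : ℕ → ℕ} (hτ : ∀ n, (R n).ancL (τ (n + 1)) = τ n)
    (hrich : ∀ n, Rich R n (τ n)) (N : ℕ) : ∃ n, N ≤ n ∧ (R n).IsPrincMuL (τ n) := by
  by_contra! hc
  have hstep : ∀ n, N ≤ n →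
      Rule.sizeAt (R (n + 1)).concl.lhs (τ (n + 1)) < Rule.sizeAt (R n).concl.lhs (τ n) ∨
      (Rule.sizeAt (R (n + 1)).concl.lhs (τ (n + 1)) = Rule.sizeAt (R n).concl.lhs (τ n) ∧
        ∀ j', (R n).ancL j' = τ n → j' = τ (n + 1)) := by
    intro n hn
    have := (Rule.step (R n) _ (hR n) _ (Rich.lt hR (hrich (n + 1)))).2
    rw [hτ n] at this
    exact this.resolve_left (hc n hn)
  -- A level `M ≥ N` minimising the formula size: from there on sizes can no longer drop.
  obtain ⟨M, hM, hmin⟩ := exists_min_size (fun n => Rule.sizeAt (R n).concl.lhs (τ n)) N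
  have hconst : ∀ n, M ≤ n →
      Rule.sizeAt (R n).concl.lhs (τ n) = Rule.sizeAt (R M).concl.lhs (τ M) := by
    intro n hn
    induction n, hn using Nat.le_induction with
    | base => rfl
    | succ n hn ih =>
      have h1 := hmin (n + 1) (by omega)
      rcases hstep n (by omega) with h | h <;> omega
  have huniq : ∀ n, M ≤ n → ∀ j', (R n).ancL j' = τ n → j' = τ (n + 1) := by
    intro n hn
    rcases hstep n (by omega) with h | h
    · have h1 := hconst n hn
      have h2 := hconst (n + 1) (by omega)
      omega
    · exact h.2
  have hdesc : ∀ k n i, M ≤ n → ancestor R n k i = τ n → i = τ (n + k) := by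
    intro k
    induction k with
    | zero => intro n i _ h; exact h
    | succ k ih =>
      intro n i hn h
      rw [ih (n + 1) i (by omega) (huniq n hn _ h), show n + 1 + k = n + (k + 1) by omega]
  obtain ⟨k, i, -, hpr, hanc⟩ := (hrich M).exists
  exact hc (M + k) (by omega) (hdesc k M i le_rfl hanc ▸ hpr)

end Thread

/-! ### Progress and threads -/

/-- Proposition 4.9: a `μHKA` preproof is progressing (every
infinite branch has infinitely many `μ-l` steps) iff every infinite branch
carries a progressing thread. -/
theorem progressing_iff_threads {α : Type} [Fintype α] [DecidableEq α]
    (P : Preproof α) :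
    P.Progressing ↔ ∀ b, P.IsBranch b → HasProgThread P b := by
  constructor
  · intro hP b hb
    choose R hRb using fun n => Option.isSome_iff_exists.1 (hb n)
    have hpath : ∀ n, Preproof.pathOf b (n + 1) = Preproof.pathOf b n ++ [b n] := fun n => by
      simp [Preproof.pathOf, List.range_succ]
    have hR : ∀ n, (R (n + 1)).concl ∈ (R n).prems := by
      intro n
      have h1 := hRb (n + 1)
      rw [hpath] at h1
      rcases lt_or_ge (b n) (R n).prems.length with h | h
      · obtain ⟨r', hr', hcl⟩ := P.children_concl _ _ (hRb n) _ h
        rw [h1, Option.some_inj] at hr'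
        rw [hr', hcl]
        exact List.get_mem _ _
      · rw [P.children_none _ _ (hRb n) _ h] at h1
        cases h1
    have hmu : ∃ᶠ n in Filter.atTop, (R n).IsMuL := by
      rw [Filter.frequently_atTop]
      intro N
      obtain ⟨n, hn, r, hr, hmu⟩ := hP b hb N
      rw [hRb n, Option.some_inj] at hr
      exact ⟨n, hn, hr ▸ hmu⟩
    obtain ⟨j₀, hj₀⟩ := exists_rich_zero hR hmu
    choose! next hnext using fun n j (h : Rich R n j) => h.exists_child hR
    let τ : ℕ → ℕ := Nat.rec j₀ next
    have hrich : ∀ n, Rich R n (τ n) := by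
      intro n
      induction n with
      | zero => exact hj₀
      | succ n ih => exact (hnext n _ ih).2
    have hτ : ∀ n, (R n).ancL (τ (n + 1)) = τ n := fun n => (hnext n _ (hrich n)).1
    refine ⟨0, τ, fun n _ => ⟨R n, hRb n, (hrich n).lt hR, hτ n⟩, fun N => ?_⟩
    obtain ⟨n, hn, hpr⟩ := princ_of_rich hR hτ hrich N
    exact ⟨n, hn, n.zero_le, R n, hRb n, hpr⟩
  · intro h b hb N
    obtain ⟨k, τ, -, hinf⟩ := h b hb
    obtain ⟨n, hn, -, r, hr, hpr⟩ := hinf N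
    exact ⟨n, hn, r, hr, hpr.isMuL⟩

end CFPT
end

section
/- Modal lemma: let Γ be a cedent of closed left-guarded μν-expressions, a ∈ A, and for each b ∈ A let S_b be a finite set of cedents. If L(aΓ) ⊆ {ε} ∪ ⋃_{b∈A} L(bS_b), then L(Γ) ⊆ L(S_a), where bS_b denotes the set of cedents of S_b with the letter b prepended. -/
/-! A word `a · w` determines both its first letter `a` and its tail `w`, whether `w` is finite or
infinite (`catW_letter_inj`), and it is never empty. So if `w` lies in `L(Γ)`, the word `a · w`
lies in `L(bΔ)` for some `b` and some `Δ ∈ S_b`; comparing first letters gives `b = a`, and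
comparing tails gives `w ∈ L(Δ) ⊆ L(S_a)`. -/

namespace CFPTW

/-- `μν`-expressions over alphabet `α`, with de Bruijn indices for variables. -/
inductive NExp (α : Type) : Type
  | zero : NExp α
  | one : NExp α
  | var (n : ℕ) : NExp α
  | tok (a : α) : NExp α
  | plus (e f : NExp α) : NExp α
  | times (e f : NExp α) : NExp α
  | mu (e : NExp α) : NExp α
  | nu (e : NExp α) : NExp α
  deriving DecidableEq

namespace NExp

variable {α : Type}

def ClosedUnder : ℕ → NExp α → Prop
  | _, zero => True
  | _, one => True
  | k, var n => n < k
  | _, tok _ => True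
  | k, plus e f => ClosedUnder k e ∧ ClosedUnder k f
  | k, times e f => ClosedUnder k e ∧ ClosedUnder k f
  | k, mu e => ClosedUnder (k + 1) e
  | k, nu e => ClosedUnder (k + 1) e

def Closed (e : NExp α) : Prop := ClosedUnder 0 e

/-- substitute the closed expression `g` for de Bruijn variable `d`. -/
def subst (g : NExp α) : ℕ → NExp α → NExp α
  | _, zero => zero
  | _, one => one
  | d, var n => if n = d then g else var n
  | _, tok a => tok a
  | d, plus e f => plus (subst g d e) (subst g d f)
  | d, times e f => times (subst g d e) (subst g d f)
  | d, mu e => mu (subst g (d + 1) e)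
  | d, nu e => nu (subst g (d + 1) e)

/-- the unfolding `e(μX e)` of `μX e` (given by its body `e`). -/
def unfoldMu (e : NExp α) : NExp α := subst (mu e) 0 e

/-- the unfolding `e(νX e)` of `νX e` (given by its body `e`). -/
def unfoldNu (e : NExp α) : NExp α := subst (nu e) 0 e

/-- left-productive `μν`-expressions: `p ::= a | p+q | p·e | μX p | νX p`. -/
inductive LeftProductive : NExp α → Prop
  | tok (a : α) : LeftProductive (tok a)
  | plus {p q} : LeftProductive p → LeftProductive q → LeftProductive (plus p q)
  | times {p} (e) : LeftProductive p → LeftProductive (times p e)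
  | mu {p} : LeftProductive p → LeftProductive (mu p)
  | nu {p} : LeftProductive p → LeftProductive (nu p)

/-- every free occurrence of variable `n` occurs inside a subexpression
(in which it remains free) satisfying `P`. -/
def GuardVar (P : NExp α → Prop) : ℕ → NExp α → Prop
  | _, zero => True
  | _, one => True
  | _, tok _ => True
  | n, var m => P (var m) ∨ m ≠ n
  | n, plus e f => P (plus e f) ∨ (GuardVar P n e ∧ GuardVar P n f)
  | n, times e f => P (times e f) ∨ (GuardVar P n e ∧ GuardVar P n f)
  | n, mu e => P (mu e) ∨ GuardVar P (n + 1) e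
  | n, nu e => P (nu e) ∨ GuardVar P (n + 1) e

def GuardedBy (P : NExp α → Prop) : NExp α → Prop
  | zero => True
  | one => True
  | var _ => True
  | tok _ => True
  | plus e f => GuardedBy P e ∧ GuardedBy P f
  | times e f => GuardedBy P e ∧ GuardedBy P f
  | mu e => GuardVar P 0 e ∧ GuardedBy P e
  | nu e => GuardVar P 0 e ∧ GuardedBy P e

/-- each variable occurrence occurs free in a left-productive subexpression. -/
def LeftGuarded (e : NExp α) : Prop := GuardedBy LeftProductive e

/-- the subformula (subterm) relation. -/
inductive Subterm : NExp α → NExp α → Prop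
  | refl (e) : Subterm e e
  | plusL {g e} (f) : Subterm g e → Subterm g (plus e f)
  | plusR {g f} (e) : Subterm g f → Subterm g (plus e f)
  | timesL {g e} (f) : Subterm g e → Subterm g (times e f)
  | timesR {g f} (e) : Subterm g f → Subterm g (times e f)
  | mu {g e} : Subterm g e → Subterm g (mu e)
  | nu {g e} : Subterm g e → Subterm g (nu e)

/-- `e` is a `μ`-formula. -/
def IsMu : NExp α → Prop
  | mu _ => True
  | _ => False

/-- `e` is a `ν`-formula. -/
def IsNu : NExp α → Prop
  | nu _ => True
  | _ => False

end NExp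

/-- finite and infinite (`ω`-)words over `α` : `A^{≤ω}`. -/
def WordO (α : Type) : Type := List α ⊕ (ℕ → α)

/-- the empty word. -/
def epsW {α} : WordO α := Sum.inl []

/-- concatenation of possibly infinite words; `v · w = v` when `v` is infinite. -/
def catW {α} : WordO α → WordO α → WordO α
  | Sum.inl v, Sum.inl w => Sum.inl (v ++ w)
  | Sum.inl v, Sum.inr s =>
      Sum.inr fun n => if h : n < v.length then v.get ⟨n, h⟩ else s (n - v.length)
  | Sum.inr s, _ => Sum.inr s

/-- product of languages of possibly infinite words. -/
def prodW {α} (P Q : Set (WordO α)) : Set (WordO α) :=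
  {u | ∃ v ∈ P, ∃ w ∈ Q, u = catW v w}

def consEnvW {α} (A : Set (WordO α)) (ρ : ℕ → Set (WordO α)) : ℕ → Set (WordO α)
  | 0 => A
  | n + 1 => ρ n

/-- language semantics of `μν`-expressions over `A^{≤ω}`: `μX e` denotes the
least and `νX e` the greatest fixed point of `A ↦ ⟦e⟧(A)` (Knaster–Tarski). -/
def wsem {α} (ρ : ℕ → Set (WordO α)) : NExp α → Set (WordO α)
  | .zero => ∅
  | .one => {epsW}
  | .var n => ρ n
  | .tok a => {Sum.inl [a]}
  | .plus e f => wsem ρ e ∪ wsem ρ f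
  | .times e f => prodW (wsem ρ e) (wsem ρ f)
  | .mu e => ⋂₀ {A : Set (WordO α) | wsem (consEnvW A ρ) e ⊆ A}
  | .nu e => ⋃₀ {A : Set (WordO α) | A ⊆ wsem (consEnvW A ρ) e}

/-- the `ω`-language of a (closed) `μν`-expression. -/
def wlang {α} (e : NExp α) : Set (WordO α) := wsem (fun _ => ∅) e

/-- a cedent: a finite list of `μν`-expressions. -/
abbrev NCedent (α : Type) := List (NExp α)

/-- language of a cedent: concatenation of the languages of its members. -/
def wlangCed {α} (Γ : NCedent α) : Set (WordO α) :=
  Γ.foldr (fun e A => prodW (wlang e) A) {epsW}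

/-- right-hand side of a hypersequent: a finite set of cedents. -/
abbrev NRHSet (α : Type) := Finset (NCedent α)

/-- language of a RHS: the union of the languages of its cedents. -/
def wlangRHS {α} (S : NRHSet α) : Set (WordO α) := ⋃ Δ ∈ S, wlangCed Δ

def NCedClosed {α} (Γ : NCedent α) : Prop := ∀ e ∈ Γ, e.Closed
def NCedLeftGuarded {α} (Γ : NCedent α) : Prop := ∀ e ∈ Γ, e.LeftGuarded

/-- `l` is a finite prefix of the possibly infinite word `u`. -/
def IsPrefixW {α} (l : List α) : WordO α → Prop
  | Sum.inl v => l <+: v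
  | Sum.inr s => ∀ (i : ℕ) (h : i < l.length), l.get ⟨i, h⟩ = s i


/-- Left cancellation of a single letter; this also recovers the letter. -/
theorem catW_letter_inj {α : Type} {a b : α} {u v : WordO α}
    (h : catW (Sum.inl [a]) u = catW (Sum.inl [b]) v) : a = b ∧ u = v := by
  rcases u with u | u <;> rcases v with v | v
  · have h' : a :: u = b :: v := Sum.inl.inj h
    injection h' with h1 h2
    exact ⟨h1, congrArg Sum.inl h2⟩
  · exact nomatch (show (Sum.inl (a :: u) : List α ⊕ (ℕ → α)) = Sum.inr _ from h)
  · exact nomatch (show (Sum.inr _ : List α ⊕ (ℕ → α)) = Sum.inl (b :: v) from h)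
  · have h' := Sum.inr.inj h
    refine ⟨by simpa using congrFun h' 0, congrArg Sum.inr (funext fun n => ?_)⟩
    simpa using congrFun h' (n + 1)

theorem catW_letter_ne_eps {α : Type} (a : α) (u : WordO α) :
    catW (Sum.inl [a]) u ≠ epsW := by
  intro h
  rcases u with u | u
  · have h' : a :: u = [] := Sum.inl.inj h
    exact List.cons_ne_nil _ _ h'
  · exact nomatch (show (Sum.inr _ : List α ⊕ (ℕ → α)) = Sum.inl [] from h)

theorem mem_wlangCed_tok_cons {α : Type} {a : α} {Γ : NCedent α} {u : WordO α} :
    u ∈ wlangCed (NExp.tok a :: Γ) ↔ ∃ w ∈ wlangCed Γ, u = catW (Sum.inl [a]) w := by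
  constructor
  · rintro ⟨v, rfl, w, hw, rfl⟩
    exact ⟨w, hw, rfl⟩
  · rintro ⟨w, hw, rfl⟩
    exact ⟨_, rfl, w, hw, rfl⟩

/-- Proposition 7.6, modal lemma: if
`L(aΓ) ⊆ {ε} ∪ ⋃_{b∈A} L(b S_b)` then `L(Γ) ⊆ L(S_a)`. -/
theorem modal_lemma {α : Type} [Fintype α] [DecidableEq α]
    (Γ : NCedent α) (a : α) (S : α → NRHSet α)
    (hc : NCedClosed Γ) (hg : NCedLeftGuarded Γ)
    (hcS : ∀ b, ∀ Δ ∈ S b, NCedClosed Δ) (hgS : ∀ b, ∀ Δ ∈ S b, NCedLeftGuarded Δ)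
    (h : wlangCed (NExp.tok a :: Γ) ⊆
      {epsW} ∪ ⋃ b : α, wlangRHS ((S b).image (NExp.tok b :: ·))) :
    wlangCed Γ ⊆ wlangRHS (S a) := by
  intro w hw
  rcases h (mem_wlangCed_tok_cons.2 ⟨w, hw, rfl⟩) with he | hu
  · exact absurd he (catW_letter_ne_eps a w)
  · obtain ⟨b, hb⟩ := Set.mem_iUnion.1 hu
    obtain ⟨Δ', hΔ', hm⟩ := Set.mem_iUnion₂.1 hb
    obtain ⟨Δ, hΔ, rfl⟩ := Finset.mem_image.1 hΔ'
    obtain ⟨w', hw', heq⟩ := mem_wlangCed_tok_cons.1 hm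
    obtain ⟨rfl, rfl⟩ := catW_letter_inj heq
    exact Set.mem_iUnion₂.2 ⟨Δ, hΔ, hw'⟩

end CFPTW
end
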